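/- arXiv:1807.09578 — 3 statements merged into one kernel-verified Lean document; each statement's English description precedes it below -/
import Mathlib

section
/- For every function λ : ∂𝔻 → ∂𝔻 of the class BV(∂𝔻) there exists a function α_λ : ∂𝔻 → ℝ of the class BV(∂𝔻) with V_{α_λ}(∂𝔻) ≤ (3π/2)·V_λ(∂𝔻) such that λ(ζ) = exp(i·α_λ(ζ)) for all ζ ∈ ∂𝔻. -/
open Complex Metric MeasureTheory Filter Topology Set
open scoped ENNReal NNReal

noncomputable section

/-- The supremum of products of mutual distances of `n`-tuples of points of `E`
(the quantity `V_n` in the definition of the transfinite diameter). -/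
noncomputable def diamProd (E : Set ℂ) (n : ℕ) : ℝ≥0∞ :=
  ⨆ (z : Fin n → ℂ) (_ : ∀ i, z i ∈ E),
    ∏ p ∈ Finset.univ.filter (fun p : Fin n × Fin n => p.1 < p.2), edist (z p.1) (z p.2)

/-- The logarithmic capacity of a (bounded) set, defined as its transfinite diameter
`lim_n V_n^{2/(n(n-1))}` (realized via `limsup`). -/
noncomputable def logCap (E : Set ℂ) : ℝ≥0∞ :=
  Filter.limsup (fun n : ℕ => diamProd E n ^ ((2 : ℝ) / ((n : ℝ) * ((n : ℝ) - 1))))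
    Filter.atTop

/-- A set is measurable with respect to logarithmic capacity if its inner capacity
(sup of capacities of compact subsets) equals its outer capacity
(inf of capacities of open supersets). -/
def CapMeasurableSet (E : Set ℂ) : Prop :=
  (⨆ (F : Set ℂ) (_ : IsCompact F) (_ : F ⊆ E), logCap F) =
    (⨅ (U : Set ℂ) (_ : IsOpen U) (_ : E ⊆ U), logCap U)

/-- A function defined on `E ⊆ ℂ` is measurable with respect to logarithmic capacity if
preimages of open sets are measurable with respect to logarithmic capacity. -/
def CapMeasFunOn {X : Type*} [TopologicalSpace X] (E : Set ℂ) (f : ℂ → X) : Prop :=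
  ∀ O : Set X, IsOpen O → CapMeasurableSet {z | z ∈ E ∧ f z ∈ O}

/-- `P` holds quasi-everywhere on `E`: the exceptional set has logarithmic capacity zero. -/
def QEOn (E : Set ℂ) (P : ℂ → Prop) : Prop :=
  logCap {z | z ∈ E ∧ ¬ P z} = 0

/-- The unit circle `∂𝔻`. -/
def unitCircle : Set ℂ := Metric.sphere 0 1

/-- Variation of `f` along the parametrized arc `p` over parameters in `I`. -/
noncomputable def varAlong {E : Type*} [SeminormedAddCommGroup E]
    (f : ℂ → E) (p : ℝ → ℂ) (I : Set ℝ) : ℝ≥0∞ :=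
  ⨆ (k : ℕ) (t : Fin (k + 1) → ℝ) (_ : Monotone t) (_ : ∀ i, t i ∈ I),
    ∑ i : Fin k, (‖f (p (t i.succ)) - f (p (t i.castSucc))‖₊ : ℝ≥0∞)

/-- Cyclic variation of `f` on the unit circle: the supremum of
`∑ⱼ ‖f(ζ_{j+1}) - f(ζ_j)‖` over all finite collections of points of `∂𝔻` in cyclic order
(realized by monotone angle parameters running over at most one full turn). -/
noncomputable def circleVar {E : Type*} [SeminormedAddCommGroup E] (f : ℂ → E) : ℝ≥0∞ :=
  ⨆ (k : ℕ) (t : Fin (k + 1) → ℝ) (_ : Monotone t)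
    (_ : t (Fin.last k) ≤ t 0 + 2 * Real.pi),
    ∑ i : Fin k, (‖f (circleMap 0 1 (t i.succ)) - f (circleMap 0 1 (t i.castSucc))‖₊ : ℝ≥0∞)

/-- `A` is a subarc of the curve `Γ` on which `f` has bounded variation. -/
def IsBVArcOn {E : Type*} [SeminormedAddCommGroup E] (f : ℂ → E) (Γ A : Set ℂ) : Prop :=
  A ⊆ Γ ∧ ∃ (p : ℝ → ℂ) (I : Set ℝ), I.OrdConnected ∧ ContinuousOn p I ∧
    Set.InjOn p I ∧ p '' I = A ∧ varAlong f p I < ⊤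

/-- `f` is of countable bounded variation on the curve `Γ`: there are countably many
mutually disjoint arcs of `Γ` on each of which `f` has bounded variation, whose complement
in `Γ` has logarithmic capacity zero. -/
def CBVOn {E : Type*} [SeminormedAddCommGroup E] (f : ℂ → E) (Γ : Set ℂ) : Prop :=
  ∃ γ : ℕ → Set ℂ, (Pairwise fun m n => Disjoint (γ m) (γ n)) ∧
    (∀ n, IsBVArcOn f Γ (γ n)) ∧ logCap (Γ \ ⋃ n, γ n) = 0

/-- The open sector (angle) with vertex `ζ`, direction `e` and half-opening `a`. -/
def Sector (ζ e : ℂ) (a : ℝ) : Set ℂ :=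
  {z | z ≠ ζ ∧ |Complex.arg ((z - ζ) / e)| < a}

/-- `f` has angular (nontangential) limit `L` at the boundary point `ζ` of `D`:
along every angle with vertex `ζ` lying in `D` near `ζ`, `f` tends to `L`. -/
def AngularLimit {X : Type*} [TopologicalSpace X] (f : ℂ → X) (D : Set ℂ) (ζ : ℂ)
    (L : X) : Prop :=
  ∀ (e : ℂ) (a r : ℝ), e ≠ 0 → 0 < a → a < Real.pi / 2 → 0 < r →
    Sector ζ e a ∩ Metric.ball ζ r ⊆ D →
    Filter.Tendsto f (𝓝[Sector ζ e a ∩ Metric.ball ζ r] ζ) (𝓝 L)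

/-- `u` is harmonic on `D`. -/
def IsHarmonicOn (u : ℂ → ℝ) (D : Set ℂ) : Prop :=
  ContDiffOn ℝ 2 u D ∧ ∀ z ∈ D,
    fderiv ℝ (fun w => fderiv ℝ u w 1) z 1
      + fderiv ℝ (fun w => fderiv ℝ u w Complex.I) z Complex.I = 0

/-- The curve `Γ` has tangent line at `ζ` in the direction `e`. -/
def HasTangentVia (Γ : Set ℂ) (ζ e : ℂ) : Prop :=
  e ≠ 0 ∧ Filter.Tendsto
    (fun z => Metric.infDist z {w : ℂ | ∃ t : ℝ, w = ζ + t • e} / ‖z - ζ‖)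
    (𝓝[Γ \ {ζ}] ζ) (𝓝 0)

/-- The curve `Γ` has a tangent at `ζ`. -/
def HasTangentAt (Γ : Set ℂ) (ζ : ℂ) : Prop := ∃ e : ℂ, HasTangentVia Γ ζ e

/-- `D` is a Jordan domain: a bounded domain whose boundary is a Jordan curve. -/
def IsJordanDomain (D : Set ℂ) : Prop :=
  IsOpen D ∧ IsConnected D ∧ Bornology.IsBounded D ∧
    Nonempty ((Metric.sphere (0 : ℂ) 1) ≃ₜ (frontier D))

/-- The quasihyperbolic distance in `D`: the infimum of `∫ ds / d(ζ, ∂D)` over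
(rectifiable, here Lipschitz-parametrized) curves joining `z` and `w` in `D`. -/
noncomputable def qhDist (D : Set ℂ) (z w : ℂ) : ℝ :=
  sInf {L : ℝ | ∃ γ : ℝ → ℂ, (∃ K : ℝ≥0, LipschitzOnWith K γ (Set.Icc 0 1)) ∧
    (∀ t ∈ Set.Icc (0 : ℝ) 1, γ t ∈ D) ∧ γ 0 = z ∧ γ 1 = w ∧
    L = ∫ t in (0 : ℝ)..1, ‖deriv γ t‖ / Metric.infDist (γ t) (frontier D)}

/-- `D` satisfies the quasihyperbolic boundary condition. -/
def QHBC (D : Set ℂ) : Prop :=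
  ∃ (a b : ℝ) (z₀ : ℂ), z₀ ∈ D ∧ ∀ z ∈ D,
    qhDist D z z₀ ≤
      a * Real.log (Metric.infDist z₀ (frontier D) / Metric.infDist z (frontier D)) + b

/-- `D` satisfies the (A)-condition of Ladyzhenskaya–Ural'tseva. -/
def ACondition (D : Set ℂ) : Prop :=
  ∃ Θ₀ ∈ Set.Ioo (0 : ℝ) 1, ∃ ρ₀ ∈ Set.Ioo (0 : ℝ) 1,
    ∀ ζ ∈ frontier D, ∀ ρ : ℝ, 0 < ρ → ρ ≤ ρ₀ →
      volume (D ∩ Metric.ball ζ ρ) ≤ ENNReal.ofReal Θ₀ * volume (Metric.ball ζ ρ)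

/-- `g₁, g₂` are the first generalized (weak) partial derivatives of `f` on `D`. -/
def HasWeakPartialsOn (f g₁ g₂ : ℂ → ℂ) (D : Set ℂ) : Prop :=
  MeasureTheory.LocallyIntegrableOn f D volume ∧
  MeasureTheory.LocallyIntegrableOn g₁ D volume ∧
  MeasureTheory.LocallyIntegrableOn g₂ D volume ∧
  ∀ φ : ℂ → ℝ, ContDiff ℝ (⊤ : ℕ∞) φ → HasCompactSupport φ → tsupport φ ⊆ D →
    (∫ z in D, f z * (fderiv ℝ φ z 1 : ℂ)) = -(∫ z in D, g₁ z * (φ z : ℂ)) ∧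
    (∫ z in D, f z * (fderiv ℝ φ z Complex.I : ℂ)) = -(∫ z in D, g₂ z * (φ z : ℂ))

/-- `f` is a regular solution of the Beltrami equation `f_z̄ = μ f_z` on `D`:
continuous, discrete, open, with first generalized derivatives satisfying the
equation almost everywhere. -/
def IsRegularBeltramiSolution (μ : ℂ → ℂ) (f : ℂ → ℂ) (D : Set ℂ) : Prop :=
  ContinuousOn f D ∧
  (∀ w : ℂ, ∀ z ∈ D, f z = w → 𝓝[(D ∩ f ⁻¹' {w}) \ {z}] z = ⊥) ∧
  (∀ U : Set ℂ, U ⊆ D → IsOpen U → IsOpen (f '' U)) ∧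
  ∃ g₁ g₂ : ℂ → ℂ, HasWeakPartialsOn f g₁ g₂ D ∧
    ∀ᵐ z ∂(volume.restrict D),
      (g₁ z + Complex.I * g₂ z) / 2 = μ z * ((g₁ z - Complex.I * g₂ z) / 2)

/-- `f` is a quasiconformal mapping of `ℂ` onto itself: a homeomorphism of the plane
with locally square-integrable first generalized derivatives satisfying a nondegenerate
Beltrami equation a.e. -/
def IsQCOfPlane (f : ℂ → ℂ) : Prop :=
  (∃ F : ℂ ≃ₜ ℂ, ⇑F = f) ∧
  ∃ g₁ g₂ : ℂ → ℂ, HasWeakPartialsOn f g₁ g₂ Set.univ ∧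
    (∀ K : Set ℂ, IsCompact K →
      MeasureTheory.IntegrableOn (fun z => ‖g₁ z‖ ^ 2) K volume ∧
      MeasureTheory.IntegrableOn (fun z => ‖g₂ z‖ ^ 2) K volume) ∧
    ∃ μ : ℂ → ℂ, Measurable μ ∧ (∃ k : ℝ, k < 1 ∧ ∀ᵐ z ∂volume, ‖μ z‖ ≤ k) ∧
      ∀ᵐ z ∂volume,
        (g₁ z + Complex.I * g₂ z) / 2 = μ z * ((g₁ z - Complex.I * g₂ z) / 2)

/-- The gradient of `u : ℂ → ℝ` as a vector in `ℝ²`. -/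
noncomputable def gradVec (u : ℂ → ℝ) (z : ℂ) : Fin 2 → ℝ :=
  ![fderiv ℝ u z 1, fderiv ℝ u z Complex.I]

/-- `g` is the weak (generalized) gradient of `u` on `D`. -/
def HasWeakGradOn (u : ℂ → ℝ) (g : ℂ → Fin 2 → ℝ) (D : Set ℂ) : Prop :=
  MeasureTheory.LocallyIntegrableOn u D volume ∧
  MeasureTheory.LocallyIntegrableOn g D volume ∧
  ∀ φ : ℂ → ℝ, ContDiff ℝ (⊤ : ℕ∞) φ → HasCompactSupport φ → tsupport φ ⊆ D →
    (∫ z in D, u z * fderiv ℝ φ z 1) = -(∫ z in D, g z 0 * φ z) ∧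
    (∫ z in D, u z * fderiv ℝ φ z Complex.I) = -(∫ z in D, g z 1 * φ z)

/-- The class `𝓑` of symmetric, measurable, essentially bounded, uniformly elliptic
matrix functions with determinant identically `1` on `D`. -/
def InClassB (A : ℂ → Matrix (Fin 2) (Fin 2) ℝ) (D : Set ℂ) : Prop :=
  (∀ i j, Measurable fun z => A z i j) ∧
  (∀ z ∈ D, (A z).IsSymm) ∧
  (∀ z ∈ D, (A z).det = 1) ∧
  (∃ M : ℝ, ∀ᵐ z ∂(volume.restrict D), ∀ i j, |A z i j| ≤ M) ∧
  (∃ ε : ℝ, 0 < ε ∧ ∀ z ∈ D, ∀ η : Fin 2 → ℝ,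
    ε * (η 0 ^ 2 + η 1 ^ 2) ≤ ∑ i, (A z).mulVec η i * η i)

/-- `u` is `A`-harmonic on `D` (continuous weak solution of `div(A ∇u) = 0`). -/
def IsAHarmonicOn (A : ℂ → Matrix (Fin 2) (Fin 2) ℝ) (u : ℂ → ℝ) (D : Set ℂ) : Prop :=
  ContinuousOn u D ∧ ∃ g : ℂ → Fin 2 → ℝ, HasWeakGradOn u g D ∧
    ∀ φ : ℂ → ℝ, ContDiff ℝ (⊤ : ℕ∞) φ → HasCompactSupport φ → tsupport φ ⊆ D →
      (∫ z in D, ∑ i, (A z).mulVec (g z) i * gradVec φ z i) = 0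

/-- `u` of class `C¹` is `A`-harmonic on `D`. -/
def IsAHarmonicC1On (A : ℂ → Matrix (Fin 2) (Fin 2) ℝ) (u : ℂ → ℝ) (D : Set ℂ) : Prop :=
  ContDiffOn ℝ 1 u D ∧
    ∀ φ : ℂ → ℝ, ContDiff ℝ (⊤ : ℕ∞) φ → HasCompactSupport φ → tsupport φ ⊆ D →
      (∫ z in D, ∑ i, (A z).mulVec (gradVec u z) i * gradVec φ z i) = 0

/-- `u` is of class `C^{1+α}` on `D`: continuously differentiable with locally
`α`-Hölder continuous partial derivatives. -/
def IsC1HolderOn (u : ℂ → ℝ) (α : ℝ≥0) (D : Set ℂ) : Prop :=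
  ContDiffOn ℝ 1 u D ∧ ∀ z ∈ D, ∃ r > (0 : ℝ), ∃ C : ℝ≥0,
    HolderOnWith C α (fun w => gradVec u w) (D ∩ Metric.ball z r)

/-- The entries of the matrix function `A` are locally `α`-Hölder continuous on `D`. -/
def EntriesLocHolderOn (A : ℂ → Matrix (Fin 2) (Fin 2) ℝ) (α : ℝ≥0) (D : Set ℂ) : Prop :=
  ∀ z ∈ D, ∃ r > (0 : ℝ), ∃ C : ℝ≥0, ∀ i j,
    HolderOnWith C α (fun w => A w i j) (D ∩ Metric.ball z r)

/-- `n` is the interior unit normal to `∂D` at `ζ`: a unit vector orthogonal to a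
tangent direction of `∂D` at `ζ` and pointing into `D`. -/
def IsInteriorNormalAt (D : Set ℂ) (ζ n : ℂ) : Prop :=
  ‖n‖ = 1 ∧
  (∃ e : ℂ, HasTangentVia (frontier D) ζ e ∧ (n * (starRingEnd ℂ) e).re = 0) ∧
  ∃ ε > (0 : ℝ), ∀ t : ℝ, 0 < t → t < ε → ζ + t • n ∈ D

end

lemma bvarg_step (a b : ℂ) (ha : ‖a‖ = 1) (hb : ‖b‖ = 1) (x : ℝ)
    (hx : a = Complex.exp ((x : ℂ) * Complex.I)) :
    ∃ y : ℝ, b = Complex.exp ((y : ℂ) * Complex.I) ∧ |y - x| ≤ Real.pi / 2 * ‖a - b‖ := by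
  have ha0 : a ≠ 0 := by rintro rfl; simp at ha
  have hb0 : b ≠ 0 := by rintro rfl; simp at hb
  refine ⟨x + (b / a).arg, ?_, ?_⟩
  · have h := Complex.norm_mul_exp_arg_mul_I (b / a)
    rw [norm_div, ha, hb, div_one, Complex.ofReal_one, one_mul] at h
    rw [Complex.ofReal_add, add_mul, Complex.exp_add, ← hx, h]
    field_simp
  · have h := Complex.angle_le_mul_norm_sub hb ha
    rw [Complex.angle_eq_abs_arg hb0 ha0, norm_sub_rev] at h
    simpa using h

lemma bvarg_finite (f : ℝ → ℂ) (W : ℝ → ℝ) (hf : ∀ t, ‖f t‖ = 1) (hW0 : ∀ t, 0 ≤ W t)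
    (hW : ∀ s t, s ≤ t → Real.pi / 2 * ‖f s - f t‖ ≤ W t - W s) (F : Finset ℝ) :
    ∃ β : ℝ → ℝ, (∀ t, |β t| ≤ Real.pi + W t) ∧
      (∀ t ∈ F, f t = Complex.exp ((β t : ℂ) * Complex.I)) ∧
      (∀ s ∈ F, ∀ t ∈ F, s ≤ t → |β t - β s| ≤ W t - W s) := by
  induction F using Finset.induction_on_max with
  | empty =>
    refine ⟨fun _ => 0, fun t => ?_, by simp, by simp⟩
    have := hW0 t
    have := Real.pi_pos
    simp only [abs_zero]
    linarith
  | insert a s hs ih =>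
    obtain ⟨β, h1, h2, h3⟩ := ih
    have key : ∃ y : ℝ, f a = Complex.exp ((y : ℂ) * Complex.I) ∧ |y| ≤ Real.pi + W a ∧
        ∀ x ∈ s, |y - β x| ≤ W a - W x := by
      rcases s.eq_empty_or_nonempty with rfl | hne
      · refine ⟨(f a).arg, ?_, ?_, by simp⟩
        · have h := Complex.norm_mul_exp_arg_mul_I (f a)
          rw [hf, Complex.ofReal_one, one_mul] at h
          exact h.symm
        · have := Complex.abs_arg_le_pi (f a)
          have := hW0 a
          linarith
      · have hm := s.max'_mem hne
        set m := s.max' hne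
        obtain ⟨y, hy, hy2⟩ := bvarg_step (f m) (f a) (hf m) (hf a) (β m) (h2 m hm)
        have hma := hW m a (hs m hm).le
        refine ⟨y, hy, ?_, fun x hx => ?_⟩
        · have e1 := h1 m
          have e2 : |y| ≤ |y - β m| + |β m| := by
            simpa using abs_add_le (y - β m) (β m)
          linarith
        · have e1 := h3 x hx m hm (s.le_max' x hx)
          have e2 := abs_sub_le y (β m) (β x)
          linarith
    obtain ⟨y, k1, k2, k3⟩ := key
    have hne : ∀ x ∈ s, x ≠ a := fun x hx => (hs x hx).ne
    refine ⟨Function.update β a y, fun t => ?_, fun t ht => ?_, fun u hu t ht hut => ?_⟩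
    · by_cases h : t = a
      · subst h; simpa using k2
      · simpa [h] using h1 t
    · rcases Finset.mem_insert.1 ht with rfl | ht
      · simpa using k1
      · simpa [hne t ht] using h2 t ht
    · rcases Finset.mem_insert.1 ht with rfl | ht
      · rcases Finset.mem_insert.1 hu with rfl | hu
        · simp
        · simpa [hne u hu] using k3 u hu
      · rcases Finset.mem_insert.1 hu with rfl | hu
        · rename_i ht'
          exact absurd (hs t ht') (not_lt.2 hut)
        · simpa [hne u hu, hne t ht] using h3 u hu t ht hut

lemma bvarg_lift (f : ℝ → ℂ) (W : ℝ → ℝ) (hf : ∀ t, ‖f t‖ = 1) (hW0 : ∀ t, 0 ≤ W t)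
    (hW : ∀ s t, s ≤ t → Real.pi / 2 * ‖f s - f t‖ ≤ W t - W s) :
    ∃ β : ℝ → ℝ, (∀ t, f t = Complex.exp ((β t : ℂ) * Complex.I)) ∧
      (∀ s t, s ≤ t → |β t - β s| ≤ W t - W s) := by
  let box : Set (ℝ → ℝ) := Set.pi Set.univ (fun t => Set.Icc (-(Real.pi + W t)) (Real.pi + W t))
  have hbox : IsCompact box := isCompact_univ_pi (fun t => isCompact_Icc)
  let C : Finset ℝ → Set (ℝ → ℝ) := fun F =>
    {β | (∀ t ∈ F, f t = Complex.exp ((β t : ℂ) * Complex.I)) ∧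
      (∀ s ∈ F, ∀ t ∈ F, s ≤ t → |β t - β s| ≤ W t - W s)}
  have hC : ∀ F, IsClosed (C F) := by
    intro F
    refine IsClosed.and ?_ ?_
    · simp only [Set.ofPred_forall]
      refine isClosed_iInter fun t => isClosed_iInter fun _ => ?_
      exact isClosed_eq continuous_const (by fun_prop)
    · simp only [Set.ofPred_forall]
      refine isClosed_iInter fun s => isClosed_iInter fun _ => isClosed_iInter fun t =>
        isClosed_iInter fun _ => isClosed_iInter fun _ => ?_
      exact isClosed_le (by fun_prop) continuous_const
  have hne : (⋂ F, box ∩ C F).Nonempty := by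
    refine IsCompact.nonempty_iInter_of_directed_nonempty_isCompact_isClosed
      (fun F => box ∩ C F) ?_ ?_ ?_ ?_
    · intro F G
      classical
      refine ⟨F ∪ G, ?_, ?_⟩
      · rintro β ⟨hb, h1, h2⟩
        exact ⟨hb, fun t ht => h1 t (Finset.mem_union_left _ ht), fun s hs t ht =>
          h2 s (Finset.mem_union_left _ hs) t (Finset.mem_union_left _ ht)⟩
      · rintro β ⟨hb, h1, h2⟩
        exact ⟨hb, fun t ht => h1 t (Finset.mem_union_right _ ht), fun s hs t ht =>
          h2 s (Finset.mem_union_right _ hs) t (Finset.mem_union_right _ ht)⟩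
    · intro F
      obtain ⟨β, h1, h2, h3⟩ := bvarg_finite f W hf hW0 hW F
      exact ⟨β, fun t _ => abs_le.1 (h1 t), h2, h3⟩
    · exact fun F => hbox.inter_right (hC F)
    · exact fun F => hbox.isClosed.inter (hC F)
  obtain ⟨β, hβ⟩ := hne
  rw [mem_iInter] at hβ
  refine ⟨β, fun t => (hβ {t}).2.1 t (by simp), fun s t hst => ?_⟩
  exact (hβ {s, t}).2.2 s (by simp) t (by simp) hst

lemma bvarg_evar_le (lam : ℂ → ℂ) :
    eVariationOn (fun t : ℝ => lam (circleMap 0 1 t)) (Icc 0 (2 * Real.pi)) ≤ circleVar lam := by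
  refine iSup_le ?_
  rintro ⟨n, u, hu, us⟩
  unfold circleVar
  refine le_iSup_of_le n (le_iSup_of_le (fun i => u i) (le_iSup_of_le ?_ (le_iSup_of_le ?_ ?_)))
  · exact fun i j hij => hu hij
  · have h1 := (us n).2
    have h2 := (us 0).1
    simp only [Fin.val_last, Fin.val_zero]
    linarith
  · rw [Finset.sum_range]
    refine Finset.sum_le_sum fun i _ => ?_
    simp only [Fin.val_succ, Fin.val_castSucc]
    rw [edist_eq_enorm_sub, enorm_eq_nnnorm]

lemma bvarg_mod (x : ℝ) : toIcoMod Real.two_pi_pos 0 (circleMap 0 1 x).arg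
    = toIcoMod Real.two_pi_pos 0 x := by
  have : circleMap 0 1 x = Complex.exp (x * Complex.I) := by simp [circleMap]
  rw [this, Complex.arg_exp_mul_I, ← self_sub_toIocDiv_zsmul, toIcoMod_sub_zsmul]

/-- every `BV` function `λ : ∂𝔻 → ∂𝔻` admits a `BV` function of argument
`α_λ` with `V_{α_λ} ≤ (3π/2)·V_λ` and `λ = exp(i α_λ)` on `∂𝔻`. -/
theorem bv_argument_function (lam : ℂ → ℂ)
    (hmap : ∀ z ∈ unitCircle, lam z ∈ unitCircle)
    (hBV : circleVar lam ≠ ⊤) :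
    ∃ α : ℂ → ℝ, circleVar α ≠ ⊤ ∧
      circleVar α ≤ ENNReal.ofReal (3 * Real.pi / 2) * circleVar lam ∧
      ∀ z ∈ unitCircle, lam z = Complex.exp ((α z : ℂ) * Complex.I) := by
  have hpi := Real.pi_pos
  let g : ℝ → ℂ := fun t => lam (circleMap 0 1 t)
  let cl : ℝ → ℝ := fun t => max 0 (min t (2 * Real.pi))
  have hcl : Monotone cl := fun s t hst => max_le_max le_rfl (min_le_min hst le_rfl)
  have hclm : ∀ t, cl t ∈ Icc 0 (2 * Real.pi) := fun t =>
    ⟨le_max_left _ _, max_le (by positivity) (min_le_right _ _)⟩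
  let f : ℝ → ℂ := g ∘ cl
  have hvar : ∀ s : Set ℝ, eVariationOn f s ≤ circleVar lam := fun s =>
    (eVariationOn.comp_le_of_monotoneOn g cl (hcl.monotoneOn s) (fun t _ => hclm t)).trans
      (bvarg_evar_le lam)
  have hfin : ∀ s : Set ℝ, eVariationOn f s ≠ ⊤ := fun s => ne_top_of_le_ne_top hBV (hvar s)
  let W : ℝ → ℝ := fun t => Real.pi / 2 * (eVariationOn f (Iic t)).toReal
  have hW0 : ∀ t, 0 ≤ W t := fun t => by positivity
  let M : ℝ := Real.pi / 2 * (circleVar lam).toReal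
  have hM0 : 0 ≤ M := by positivity
  have hWM : ∀ t, W t ≤ M := fun t =>
    mul_le_mul_of_nonneg_left (ENNReal.toReal_mono hBV (hvar _)) (by positivity)
  have hW : ∀ s t, s ≤ t → Real.pi / 2 * ‖f s - f t‖ ≤ W t - W s := by
    intro s t hst
    have h1 := eVariationOn.add_le_union f (s := Iic s) (t := Icc s t)
      (fun x hx y hy => le_trans hx hy.1)
    rw [Iic_union_Icc_eq_Iic hst] at h1
    have h2 := eVariationOn.edist_le f (left_mem_Icc.2 hst) (right_mem_Icc.2 hst)
    have h3 := ENNReal.toReal_mono (hfin _) ((add_le_add_right h2 _).trans h1)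
    rw [ENNReal.toReal_add (hfin _) (edist_ne_top _ _), ← dist_edist, dist_eq_norm] at h3
    have h4 : ‖f s - f t‖ ≤ (eVariationOn f (Iic t)).toReal - (eVariationOn f (Iic s)).toReal := by
      linarith
    have h5 := mul_le_mul_of_nonneg_left h4 (by positivity : 0 ≤ Real.pi / 2)
    rw [mul_sub] at h5
    exact h5
  have hf : ∀ t, ‖f t‖ = 1 := by
    intro t
    have := hmap (circleMap 0 1 (cl t)) (by simp [unitCircle, circleMap])
    simpa [unitCircle, f, g] using this
  obtain ⟨β, hβ1, hβ2⟩ := bvarg_lift f W hf hW0 hW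
  have hβ3 : ∀ s t, |β t - β s| ≤ M := by
    intro s t
    rcases le_total s t with h | h
    · have := hβ2 s t h; have := hWM t; have := hW0 s; linarith
    · have := hβ2 t s h; have := hWM s; have := hW0 t
      rw [abs_sub_comm]; linarith
  let θ : ℝ → ℝ := toIcoMod Real.two_pi_pos 0
  let α : ℂ → ℝ := fun z => β (θ z.arg)
  let N : ℝ → ℤ := toIcoDiv Real.two_pi_pos 0
  let Φ : ℝ → ℝ := fun x => W (θ x) + N x * (2 * M)
  have hdecomp : ∀ x, θ x + N x * (2 * Real.pi) = x := by
    intro x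
    have := toIcoMod_add_toIcoDiv_zsmul Real.two_pi_pos 0 x
    simpa [θ, N] using this
  have hθ : ∀ x, 0 ≤ θ x ∧ θ x < 2 * Real.pi := fun x => toIcoMod_mem_Ico' Real.two_pi_pos x
  have hΦ : ∀ x y, x ≤ y → |β (θ y) - β (θ x)| ≤ Φ y - Φ x := by
    intro x y hxy
    have dx := hdecomp x
    have dy := hdecomp y
    have tx := hθ x
    have ty := hθ y
    have hN : N x ≤ N y := by
      by_contra! hlt
      have : (N y : ℝ) + 1 ≤ N x := by exact_mod_cast hlt
      nlinarith
    rcases hN.eq_or_lt with he | hlt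
    · have : θ x ≤ θ y := by rw [← he] at dy; linarith
      have := hβ2 _ _ this
      simp only [Φ, he]
      linarith
    · have h1 : (N x : ℝ) + 1 ≤ N y := by exact_mod_cast hlt
      simp only [Φ]
      have h2 : (1 : ℝ) * (2 * M) ≤ (N y - N x) * (2 * M) :=
        mul_le_mul_of_nonneg_right (by linarith) (by linarith)
      have := hβ3 (θ x) (θ y)
      have := hWM (θ x)
      have := hW0 (θ y)
      linarith
  have hΦt : ∀ x, Φ (x + 2 * Real.pi) = Φ x + 2 * M := by
    intro x
    simp only [Φ, θ, N, toIcoMod_add_right, toIcoDiv_add_right]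
    push_cast
    ring
  have hbound : circleVar α ≤ ENNReal.ofReal (3 * Real.pi / 2) * circleVar lam := by
    refine iSup_le fun k => iSup_le fun t => iSup_le fun ht => iSup_le fun hspan => ?_
    have hα : ∀ x, α (circleMap 0 1 x) = β (θ x) := fun x => by
      simp only [α, θ, bvarg_mod]
    have h1 : ∀ i : Fin k, (‖α (circleMap 0 1 (t i.succ)) - α (circleMap 0 1 (t i.castSucc))‖₊ : ℝ≥0∞)
        = ENNReal.ofReal |β (θ (t i.succ)) - β (θ (t i.castSucc))| := by
      intro i
      rw [hα, hα, ← Real.norm_eq_abs, ofReal_norm, enorm_eq_nnnorm]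
    rw [Finset.sum_congr rfl (fun i _ => h1 i),
      ← ENNReal.ofReal_sum_of_nonneg (fun i _ => abs_nonneg _), ← ENNReal.ofReal_toReal hBV,
      ← ENNReal.ofReal_mul (by positivity)]
    apply ENNReal.ofReal_le_ofReal
    have h2 : ∑ i : Fin k, |β (θ (t i.succ)) - β (θ (t i.castSucc))| ≤
        ∑ i : Fin k, (Φ (t i.succ) - Φ (t i.castSucc)) :=
      Finset.sum_le_sum fun i _ => hΦ _ _ (ht (Fin.castSucc_le_succ i))
    have h3 : ∑ i : Fin k, (Φ (t i.succ) - Φ (t i.castSucc)) = Φ (t (Fin.last k)) - Φ (t 0) := by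
      have e1 := Fin.sum_univ_succ (fun i => Φ (t i))
      have e2 := Fin.sum_univ_castSucc (fun i => Φ (t i))
      rw [Finset.sum_sub_distrib]
      linarith
    have h4 := (abs_nonneg _).trans (hΦ _ _ hspan)
    rw [hΦt] at h4
    have h5 : 2 * M ≤ 3 * Real.pi / 2 * (circleVar lam).toReal := by
      have : 0 ≤ Real.pi * (circleVar lam).toReal := by positivity
      simp only [M]
      linarith
    linarith
  refine ⟨α, ne_top_of_le_ne_top (ENNReal.mul_ne_top ENNReal.ofReal_ne_top hBV) hbound, hbound, ?_⟩
  intro z hz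
  have hz1 : ‖z‖ = 1 := by simpa [unitCircle] using hz
  rw [← hβ1 (θ z.arg)]
  have hc : cl (θ z.arg) = θ z.arg := by
    have := hθ z.arg
    simp only [cl]
    rw [min_eq_left this.2.le, max_eq_right this.1]
  have hz2 : circleMap 0 1 (θ z.arg) = z := by
    have e : θ z.arg = z.arg - N z.arg * (2 * Real.pi) := by
      have := hdecomp z.arg; linarith
    have h := Complex.norm_mul_exp_arg_mul_I z
    rw [hz1, Complex.ofReal_one, one_mul] at h
    rw [e]
    have := (periodic_circleMap 0 1).sub_int_mul_eq (x := z.arg) (N z.arg)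
    rw [this]
    simpa [circleMap] using h
  simp only [f, g, Function.comp, hc, hz2]
end

section
/- If E ⊂ ℂ is a compact set of logarithmic capacity zero and f : E → ℂ is Hölder continuous, i.e. there exist M > 0 and γ ∈ (0,1] with |f(z) − f(w)| ≤ M·|z − w|^γ for all z, w ∈ E, then the image f(E) also has logarithmic capacity zero. -/
open Complex Metric MeasureTheory Filter Topology Set
open scoped ENNReal NNReal

lemma diamProd_holder (E : Set ℂ) (f : ℂ → ℂ) (M γ : ℝ)
    (hM : 0 < M) (hγ : γ ∈ Set.Ioc (0 : ℝ) 1)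
    (hf : ∀ z ∈ E, ∀ w ∈ E, ‖f z - f w‖ ≤ M * ‖z - w‖ ^ γ) (n : ℕ) :
    diamProd (f '' E) n ≤
      ENNReal.ofReal M ^ (n.choose 2) * diamProd E n ^ γ := by
  have hcard : (Finset.univ.filter (fun p : Fin n × Fin n => p.1 < p.2)).card = n.choose 2 := by
    have h := Finset.sum_card_bipartiteAbove_eq_sum_card_bipartiteBelow
      (s := (Finset.univ : Finset (Fin n))) (t := Finset.univ) (fun a b : Fin n => a < b)
    rw [Finset.card_filter, ← Finset.univ_product_univ, Finset.sum_product_right]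
    simp only [← Finset.card_filter]
    have : ∀ y : Fin n, (Finset.univ.filter (fun a => a < y)).card = (y : ℕ) := by
      intro y
      rw [← Fin.card_Iio y]; congr 1; ext; simp
    simp only [this]
    rw [Fin.sum_univ_eq_sum_range (fun i => i) n, Finset.sum_range_id, Nat.choose_two_right]
  unfold diamProd
  refine iSup₂_le fun z hz => ?_
  choose w hw hwz using hz
  have key : ∀ p : Fin n × Fin n, edist (z p.1) (z p.2) ≤
      ENNReal.ofReal M * edist (w p.1) (w p.2) ^ γ := by
    intro p
    rw [← hwz, ← hwz, edist_dist, edist_dist, dist_eq_norm, dist_eq_norm,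
      ENNReal.ofReal_rpow_of_nonneg (norm_nonneg _) hγ.1.le, ← ENNReal.ofReal_mul hM.le]
    exact ENNReal.ofReal_le_ofReal (hf _ (hw _) _ (hw _))
  refine (Finset.prod_le_prod' fun p _ => key p).trans ?_
  rw [Finset.prod_mul_distrib, Finset.prod_const, hcard,
    ENNReal.prod_rpow_of_nonneg hγ.1.le]
  gcongr
  · exact hγ.1.le
  · exact le_iSup₂ (f := fun (z : Fin n → ℂ) (_ : ∀ i, z i ∈ E) =>
      ∏ p ∈ Finset.univ.filter (fun p : Fin n × Fin n => p.1 < p.2), edist (z p.1) (z p.2)) w hw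

/-- Hölder continuous images of compact sets of logarithmic capacity zero
have logarithmic capacity zero. -/
theorem holder_image_capacity_zero (E : Set ℂ) (f : ℂ → ℂ) (M γ : ℝ)
    (hE : IsCompact E) (hcap : logCap E = 0)
    (hM : 0 < M) (hγ : γ ∈ Set.Ioc (0 : ℝ) 1)
    (hf : ∀ z ∈ E, ∀ w ∈ E, ‖f z - f w‖ ≤ M * ‖z - w‖ ^ γ) :
    logCap (f '' E) = 0 := by
  unfold logCap at hcap
  have h0 : Tendsto (fun n : ℕ => diamProd E n ^ ((2 : ℝ) / ((n : ℝ) * ((n : ℝ) - 1))))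
      atTop (𝓝 0) := 
    tendsto_of_le_liminf_of_limsup_le bot_le hcap.le
  have h1 := (ENNReal.continuous_rpow_const (y := γ)).tendsto 0 |>.comp h0
  rw [ENNReal.zero_rpow_of_pos hγ.1] at h1
  have h2 := ENNReal.Tendsto.const_mul (a := ENNReal.ofReal M) h1 (Or.inr ENNReal.ofReal_ne_top)
  rw [mul_zero] at h2
  refine Tendsto.limsup_eq (tendsto_of_tendsto_of_tendsto_of_le_of_le' tendsto_const_nhds h2
    (Eventually.of_forall fun _ => zero_le) ?_)
  filter_upwards [eventually_ge_atTop 2] with n hn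
  have hn' : (2 : ℝ) ≤ n := by exact_mod_cast hn
  have hpos : 0 < (n : ℝ) * ((n : ℝ) - 1) := by nlinarith
  have he : 0 ≤ (2 : ℝ) / ((n : ℝ) * ((n : ℝ) - 1)) := by positivity
  refine (ENNReal.rpow_le_rpow (diamProd_holder E f M γ hM hγ hf n) he).trans ?_
  rw [ENNReal.mul_rpow_of_nonneg _ _ he, ← ENNReal.rpow_natCast, ← ENNReal.rpow_mul,
    ← ENNReal.rpow_mul, Nat.cast_choose_two]
  have e1 : (n : ℝ) * ((n : ℝ) - 1) / 2 * (2 / ((n : ℝ) * ((n : ℝ) - 1))) = 1 := by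
    have := hpos.ne'
    generalize (n : ℝ) * ((n : ℝ) - 1) = x at *
    field_simp
  rw [e1, ENNReal.rpow_one, Function.comp_apply, ← ENNReal.rpow_mul, mul_comm γ]
end

section
/- The domain D = B(0,1) ∪ B(1+i,1) ∪ B(1−i,1) ⊂ ℂ, the union of the three open discs of radius 1 centred at 0, 1+i and 1−i, satisfies the quasihyperbolic boundary condition but does not satisfy the (A)-condition; in fact, for the boundary point 1 ∈ ∂D one has m(D ∩ B(1,ρ))/m(B(1,ρ)) → 1 as ρ → 0+, so that no constants Θ_0, ρ_0 ∈ (0,1) can satisfy the (A)-condition inequality. -/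
open Complex Metric MeasureTheory Filter Topology Set
open scoped ENNReal NNReal

/-- The union of the three open unit discs centred at `0`, `1+i` and `1-i`. -/
def threeDiscs : Set ℂ :=
  Metric.ball 0 1 ∪ Metric.ball (1 + Complex.I) 1 ∪ Metric.ball (1 - Complex.I) 1

lemma nsq (z : ℂ) : ‖z‖ ^ 2 = z.re ^ 2 + z.im ^ 2 := by
  rw [Complex.sq_norm, Complex.normSq_apply]; ring

lemma nlt {z : ℂ} {r : ℝ} (hr : 0 ≤ r) : ‖z‖ < r ↔ z.re ^ 2 + z.im ^ 2 < r ^ 2 := by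
  rw [← nsq]; exact (pow_lt_pow_iff_left₀ (norm_nonneg _) hr two_ne_zero).symm

lemma nle {z : ℂ} {r : ℝ} (hr : 0 ≤ r) : ‖z‖ ≤ r ↔ z.re ^ 2 + z.im ^ 2 ≤ r ^ 2 := by
  rw [← nsq]; exact (pow_le_pow_iff_left₀ (norm_nonneg _) hr two_ne_zero).symm

lemma mem_three (z : ℂ) : z ∈ threeDiscs ↔ z.re ^ 2 + z.im ^ 2 < 1 ∨
    (z.re - 1) ^ 2 + (z.im - 1) ^ 2 < 1 ∨ (z.re - 1) ^ 2 + (z.im + 1) ^ 2 < 1 := by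
  unfold threeDiscs
  simp only [mem_union, mem_ball, dist_eq_norm, nlt zero_le_one]
  simp [or_assoc]

lemma open_three : IsOpen threeDiscs :=
  (isOpen_ball.union isOpen_ball).union isOpen_ball

lemma one_not_mem : (1 : ℂ) ∉ threeDiscs := by rw [mem_three]; norm_num

lemma I_not_mem : (Complex.I : ℂ) ∉ threeDiscs := by rw [mem_three]; norm_num

lemma infDist_le_of_not_mem {z w : ℂ} (hz : z ∈ threeDiscs) (hw : w ∉ threeDiscs) :
    infDist z (frontier threeDiscs) ≤ dist z w := by
  obtain ⟨y, hy, h⟩ := exists_mem_frontier_infDist_compl_eq_dist hz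
    (fun h => one_not_mem (h ▸ mem_univ _))
  calc _ ≤ dist z y := infDist_le_dist_of_mem hy
    _ = infDist z threeDiscsᶜ := h.symm
    _ ≤ _ := infDist_le_dist_of_mem hw

lemma one_mem_frontier : (1 : ℂ) ∈ frontier threeDiscs := by
  rw [open_three.frontier_eq]
  refine ⟨?_, one_not_mem⟩
  have : closure (ball (0:ℂ) 1) ⊆ closure threeDiscs :=
    closure_mono (fun x hx => Or.inl (Or.inl hx))
  apply this
  rw [closure_ball _ one_ne_zero]
  simp

lemma le_infDist_of_ball {z : ℂ} {r : ℝ} (h : ball z r ⊆ threeDiscs) :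
    r ≤ infDist z (frontier threeDiscs) := by
  rw [le_infDist ⟨1, one_mem_frontier⟩]
  intro y hy
  by_contra hlt
  push Not at hlt
  have : y ∈ ball z r := by rwa [mem_ball, dist_comm]
  rw [open_three.frontier_eq] at hy
  exact hy.2 (h this)

lemma corner_ineq {u v q : ℝ} (hu : 0 ≤ u) (huv : u ≤ v) (h1 : u + v ≤ 1) (hq : 0 ≤ q)
    (hq2 : q ^ 2 = u ^ 2 + v ^ 2) : q ≤ 1 ∧ u ^ 2 + (1 - v) ^ 2 ≤ (3 * (1 - q)) ^ 2 := by
  have a : 1 - v ≤ 1 - q ^ 2 := by nlinarith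
  have hq1 : q ≤ 1 := by nlinarith
  have b : 1 - v ≤ 2 * (1 - q) := by nlinarith
  have c : (1 - v) ^ 2 ≤ (2 * (1 - q)) ^ 2 := pow_le_pow_left₀ (by linarith) b 2
  have d : u ^ 2 ≤ (1 - v) ^ 2 := pow_le_pow_left₀ hu (by linarith) 2
  refine ⟨hq1, ?_⟩
  nlinarith [sq_nonneg (1 - q)]

def centers : Set ℂ := {0, 1 + Complex.I, 1 - Complex.I}

lemma corner_dist {z w c : ℂ} {u v : ℝ} (hu : 0 ≤ u) (huv : u ≤ v) (h1 : u + v ≤ 1)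
    (hc : (z - c).re ^ 2 + (z - c).im ^ 2 = u ^ 2 + v ^ 2)
    (hw : (z - w).re ^ 2 + (z - w).im ^ 2 = u ^ 2 + (1 - v) ^ 2) :
    dist z w ≤ 3 * (1 - ‖z - c‖) := by
  obtain ⟨a, b⟩ := corner_ineq hu huv h1 (norm_nonneg (z - c)) ((nsq _).trans hc)
  rw [dist_eq_norm, nle (by linarith), hw]
  exact b

lemma radial_dist {z c : ℂ} (h0 : z ≠ c) (h1 : ‖z - c‖ < 1) :
    dist z (c + ((‖z - c‖⁻¹ : ℝ) : ℂ) * (z - c)) ≤ 3 * (1 - ‖z - c‖) := by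
  have hq : 0 < ‖z - c‖ := norm_pos_iff.2 (sub_ne_zero.2 h0)
  have : z - (c + ((‖z - c‖⁻¹ : ℝ) : ℂ) * (z - c)) = ((1 - ‖z - c‖⁻¹ : ℝ) : ℂ) * (z - c) := by
    push_cast; ring
  rw [dist_eq_norm, this, norm_mul, Complex.norm_real, Real.norm_eq_abs, abs_of_nonpos]
  · have : -(1 - ‖z - c‖⁻¹) * ‖z - c‖ = 1 - ‖z - c‖ := by field_simp; ring
    rw [this]; linarith
  · have := (one_lt_inv₀ hq).2 h1
    linarith

lemma geom_pos {z : ℂ} (hz : z ∈ threeDiscs) (hy : 0 ≤ z.im) :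
    ∃ c ∈ centers, ‖z - c‖ < 1 ∧ ∃ w ∉ threeDiscs, dist z w ≤ 3 * (1 - ‖z - c‖) := by
  rw [mem_three] at hz
  have hz' : z.re ^ 2 + z.im ^ 2 < 1 ∨ (z.re - 1) ^ 2 + (z.im - 1) ^ 2 < 1 := by
    rcases hz with h | h | h
    · exact Or.inl h
    · exact Or.inr h
    · right; nlinarith
  by_cases hs : 1 ≤ z.re + z.im
  · have hq : ‖z - (1 + Complex.I)‖ < 1 := by
      rw [nlt zero_le_one]; simp
      rcases hz' with h | h <;> nlinarith
    have hq2 := (nlt zero_le_one).1 hq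
    refine ⟨1 + Complex.I, by simp [centers], hq, ?_⟩
    by_cases hc : z.re ≤ 1 ∧ z.im ≤ 1
    · obtain ⟨hx, hy1⟩ := hc
      rcases le_total z.re z.im with h | h
      · refine ⟨Complex.I, I_not_mem, corner_dist (u := 1 - z.im) (v := 1 - z.re) ?_ ?_ ?_ ?_ ?_⟩
        · linarith
        · linarith
        · linarith
        · simp; ring
        · simp; ring
      · refine ⟨1, one_not_mem, corner_dist (u := 1 - z.re) (v := 1 - z.im) ?_ ?_ ?_ ?_ ?_⟩
        · linarith
        · linarith
        · linarith
        · simp; ring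
        · simp; ring
    · have hne : z ≠ 1 + Complex.I := by
        rintro rfl; simp at hc
      refine ⟨_, ?_, radial_dist hne hq⟩
      have hp : 0 < ‖z - (1 + Complex.I)‖ := norm_pos_iff.2 (sub_ne_zero.2 hne)
      have hn := nsq (z - (1 + Complex.I))
      set q := ‖z - (1 + Complex.I)‖
      have hqi : 0 < q⁻¹ := inv_pos.2 hp
      set a := q⁻¹ * (z.re - 1) with ha
      set b := q⁻¹ * (z.im - 1) with hb
      have hab : a ^ 2 + b ^ 2 = 1 := by
        simp at hn
        rw [ha, hb, mul_pow, mul_pow, ← mul_add, ← hn, ← mul_pow, inv_mul_cancel₀ hp.ne', one_pow]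
      have hor : 0 < a ∨ 0 < b := by
        by_contra hcon
        push Not at hcon
        apply hc
        constructor
        · by_contra h; push Not at h
          have := mul_pos hqi (sub_pos.2 h); linarith
        · by_contra h; push Not at h
          have := mul_pos hqi (sub_pos.2 h); linarith
      have hb1 : -1 ≤ b := by nlinarith
      have ha1 : -1 ≤ a := by nlinarith
      rw [mem_three]
      simp
      simp only [← ha, ← hb]
      refine ⟨?_, ?_, ?_⟩
      · rcases hor with h | h <;> nlinarith
      · linarith
      · nlinarith
  · push Not at hs
    have hq : ‖z - 0‖ < 1 := by
      rw [nlt zero_le_one]; simp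
      rcases hz' with h | h <;> nlinarith
    refine ⟨0, by simp [centers], hq, ?_⟩
    by_cases hc : 0 ≤ z.re
    · rcases le_total z.re z.im with h | h
      · refine ⟨Complex.I, I_not_mem, corner_dist (u := z.re) (v := z.im) ?_ ?_ ?_ ?_ ?_⟩
        · linarith
        · linarith
        · linarith
        · simp
        · simp; ring
      · refine ⟨1, one_not_mem, corner_dist (u := z.im) (v := z.re) ?_ ?_ ?_ ?_ ?_⟩
        · linarith
        · linarith
        · linarith
        · simp; ring
        · simp; ring
    · push Not at hc
      have hne : z ≠ 0 := by
        rintro rfl; simp at hc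
      refine ⟨_, ?_, radial_dist hne hq⟩
      have hp : 0 < ‖z - 0‖ := norm_pos_iff.2 (sub_ne_zero.2 hne)
      have hn := nsq (z - 0)
      set q := ‖z - 0‖
      have hqi : 0 < q⁻¹ := inv_pos.2 hp
      set a := q⁻¹ * z.re with ha
      set b := q⁻¹ * z.im with hb
      have hab : a ^ 2 + b ^ 2 = 1 := by
        simp at hn
        rw [ha, hb, mul_pow, mul_pow, ← mul_add, ← hn, ← mul_pow, inv_mul_cancel₀ hp.ne', one_pow]
      have han : a < 0 := mul_neg_of_pos_of_neg hqi hc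
      rw [mem_three]
      simp
      simp only [← ha, ← hb]
      refine ⟨?_, ?_, ?_⟩ <;> nlinarith

lemma conj_mem {z : ℂ} : (starRingEnd ℂ) z ∈ threeDiscs ↔ z ∈ threeDiscs := by
  rw [mem_three, mem_three]
  simp only [Complex.conj_re, Complex.conj_im]
  have e1 : (-z.im) ^ 2 = z.im ^ 2 := by ring
  have e2 : (-z.im - 1) ^ 2 = (z.im + 1) ^ 2 := by ring
  have e3 : (-z.im + 1) ^ 2 = (z.im - 1) ^ 2 := by ring
  rw [e1, e2, e3]; tauto

lemma geom {z : ℂ} (hz : z ∈ threeDiscs) :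
    ∃ c ∈ centers, ‖z - c‖ < 1 ∧ ∃ w ∉ threeDiscs, dist z w ≤ 3 * (1 - ‖z - c‖) := by
  rcases le_total 0 z.im with h | h
  · exact geom_pos hz h
  · obtain ⟨c, hc, h1, w, hw, h2⟩ := geom_pos (conj_mem.2 hz) (by simpa using h)
    have e : ∀ a : ℂ, ‖z - (starRingEnd ℂ) a‖ = ‖(starRingEnd ℂ) z - a‖ := by
      intro a
      rw [← Complex.norm_conj, map_sub, Complex.conj_conj]
    refine ⟨(starRingEnd ℂ) c, ?_, by rwa [e], (starRingEnd ℂ) w, by rwa [conj_mem], ?_⟩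
    · rcases hc with rfl | rfl | rfl <;> simp [centers, sub_eq_add_neg]
    · rw [dist_eq_norm, e, e, ← dist_eq_norm]; exact h2

lemma centers_ball {c : ℂ} (hc : c ∈ centers) : ball c 1 ⊆ threeDiscs := by
  rcases hc with rfl | rfl | rfl
  · exact fun x hx => Or.inl (Or.inl hx)
  · exact fun x hx => Or.inl (Or.inr hx)
  · exact fun x hx => Or.inr hx

lemma centers_norm {c : ℂ} (hc : c ∈ centers) : ‖c‖ ≤ 23 / 16 := by
  rw [nle (by norm_num)]
  rcases hc with rfl | rfl | rfl <;> norm_num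

lemma seg_ball {c : ℂ} (hc : c ∈ centers) {s : ℝ} (h0 : 0 ≤ s) (h1 : s ≤ 1) :
    ball ((s : ℂ) * c) (1 / 4) ⊆ threeDiscs := by
  have hn := centers_norm hc
  rcases le_total s (1 / 2) with h | h
  · refine Subset.trans (ball_subset_ball' ?_) (centers_ball (c := 0) (by simp [centers]))
    rw [dist_zero_right, norm_mul, Complex.norm_real, Real.norm_of_nonneg h0]
    nlinarith [norm_nonneg c]
  · refine Subset.trans (ball_subset_ball' ?_) (centers_ball hc)
    have : (s : ℂ) * c - c = ((s - 1 : ℝ) : ℂ) * c := by push_cast; ring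
    rw [dist_eq_norm, this, norm_mul, Complex.norm_real, Real.norm_of_nonpos (by linarith)]
    nlinarith [norm_nonneg c]

lemma qh_bound {z c : ℂ} (hc : c ∈ centers) (hz : ‖z - c‖ < 1) :
    qhDist threeDiscs z 0 ≤ 12 + Real.log (2 / (1 - ‖z - c‖)) := by
  set q := ‖z - c‖ with hq
  have hq0 : 0 ≤ q := norm_nonneg _
  have hcn := centers_norm hc
  let γ : ℝ → ℂ := fun t => z + ((min (2 * t) 1 : ℝ) : ℂ) * (c - z) - ((max (2 * t - 1) 0 : ℝ) : ℂ) * c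
  have g1 : ∀ t : ℝ, t ≤ 1 / 2 → γ t = z + ((2 * t : ℝ) : ℂ) * (c - z) := by
    intro t ht
    simp only [γ]
    rw [min_eq_left (by linarith), max_eq_right (by linarith)]; simp
  have g2 : ∀ t : ℝ, 1 / 2 ≤ t → γ t = ((2 - 2 * t : ℝ) : ℂ) * c := by
    intro t ht
    simp only [γ]
    rw [min_eq_right (by linarith), max_eq_left (by linarith)]; push_cast; ring
  have b1 : ∀ t : ℝ, 0 ≤ t → t ≤ 1 / 2 → ball (γ t) (1 - q + 2 * q * t) ⊆ threeDiscs := by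
    intro t h0 ht
    refine Subset.trans (ball_subset_ball' ?_) (centers_ball hc)
    have : z + ((2 * t : ℝ) : ℂ) * (c - z) - c = ((1 - 2 * t : ℝ) : ℂ) * (z - c) := by
      push_cast; ring
    rw [g1 t ht, dist_eq_norm, this, norm_mul, Complex.norm_real, Real.norm_of_nonneg (by linarith),
      ← hq]
    apply le_of_eq; ring
  have b2 : ∀ t : ℝ, 1 / 2 ≤ t → t ≤ 1 → ball (γ t) (1 / 4) ⊆ threeDiscs := by
    intro t ht h1
    rw [g2 t ht]
    exact seg_ball hc (by linarith) (by linarith)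
  have hpos : ∀ t : ℝ, 0 ≤ t → 0 < 1 - q + 2 * q * t := by
    intro t ht
    have := mul_nonneg hq0 ht
    linarith
  have hmem : ∀ t ∈ Icc (0:ℝ) 1, γ t ∈ threeDiscs := by
    rintro t ⟨h0, h1⟩
    rcases le_total t (1 / 2) with h | h
    · exact b1 t h0 h (mem_ball_self (hpos t h0))
    · exact b2 t h h1 (mem_ball_self (by norm_num))
  have hlip : ∃ K : ℝ≥0, LipschitzOnWith K γ (Icc 0 1) := by
    have l2 : LipschitzWith (2 : ℝ≥0) (fun t : ℝ => 2 * t) := by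
      apply LipschitzWith.of_dist_le_mul
      intro x y
      rw [Real.dist_eq, Real.dist_eq, ← mul_sub, abs_mul]; simp
    have l3 : LipschitzWith (2 : ℝ≥0) (fun t : ℝ => 2 * t - 1) := by
      apply LipschitzWith.of_dist_le_mul
      intro x y
      rw [Real.dist_eq, Real.dist_eq, sub_sub_sub_cancel_right, ← mul_sub, abs_mul]; simp
    have m : ∀ (f : ℝ → ℝ), LipschitzWith 2 f → ∀ w : ℂ,
        LipschitzWith (2 * ‖w‖₊) (fun t => ((f t : ℝ) : ℂ) * w) := by
      intro f hf w
      apply LipschitzWith.of_dist_le_mul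
      intro x y
      rw [dist_eq_norm, ← sub_mul, norm_mul, ← Complex.ofReal_sub, Complex.norm_real,
        ← dist_eq_norm]
      have := hf.dist_le_mul x y
      push_cast at this ⊢
      nlinarith [norm_nonneg w]
    have := ((LipschitzWith.const z).add (m _ (l2.min_const 1) (c - z))).sub
      (m _ (l3.max_const 0) c)
    exact ⟨_, this.lipschitzOnWith⟩
  have hle : qhDist threeDiscs z 0 ≤
      ∫ t in (0 : ℝ)..1, ‖deriv γ t‖ / Metric.infDist (γ t) (frontier threeDiscs) := by
    apply csInf_le
    · refine ⟨0, ?_⟩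
      rintro L ⟨γ', _, _, _, _, rfl⟩
      apply intervalIntegral.integral_nonneg zero_le_one
      intro t _
      exact div_nonneg (norm_nonneg _) infDist_nonneg
    · refine ⟨γ, hlip, hmem, ?_, ?_, rfl⟩
      · rw [g1 0 (by norm_num)]; simp
      · rw [g2 1 (by norm_num)]; simp
  refine hle.trans ?_
  have hcont : ContinuousOn (fun t : ℝ => 12 + 2 * q / (1 - q + 2 * q * t)) (uIcc 0 1) := by
    rw [uIcc_of_le zero_le_one]
    apply ContinuousOn.add continuousOn_const
    apply ContinuousOn.div continuousOn_const (by fun_prop)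
    intro t ht
    exact (hpos t ht.1).ne'
  have hint : IntervalIntegrable (fun t : ℝ => 12 + 2 * q / (1 - q + 2 * q * t)) volume 0 1 :=
    hcont.intervalIntegrable
  have hval : ∫ t in (0:ℝ)..1, (12 + 2 * q / (1 - q + 2 * q * t)) =
      12 + Real.log ((1 + q) / (1 - q)) := by
    rw [intervalIntegral.integral_eq_sub_of_hasDerivAt
      (f := fun t => 12 * t + Real.log (1 - q + 2 * q * t)) _ hint]
    · rw [Real.log_div (by linarith) (by linarith)]
      have : 1 - q + 2 * q * 1 = 1 + q := by ring
      simp only [this]; simp; ring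
    · intro t ht
      rw [uIcc_of_le zero_le_one] at ht
      have h1 : HasDerivAt (fun t : ℝ => 1 - q + 2 * q * t) (2 * q) t := by
        simpa using ((hasDerivAt_id t).const_mul (2 * q)).const_add (1 - q)
      have h2 : HasDerivAt (fun t : ℝ => 12 * t) 12 t := by
        simpa using (hasDerivAt_id t).const_mul 12
      exact h2.add (h1.log (hpos t ht.1).ne')
  have hcmp : ∫ t in (0 : ℝ)..1, ‖deriv γ t‖ / Metric.infDist (γ t) (frontier threeDiscs) ≤
      ∫ t in (0:ℝ)..1, (12 + 2 * q / (1 - q + 2 * q * t)) := by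
    rw [intervalIntegral.integral_of_le zero_le_one, intervalIntegral.integral_of_le zero_le_one]
    apply integral_mono_of_nonneg
    · exact Eventually.of_forall fun t => div_nonneg (norm_nonneg _) infDist_nonneg
    · exact (intervalIntegrable_iff_integrableOn_Ioc_of_le zero_le_one).1 hint
    · rw [EventuallyLE, ae_restrict_iff' measurableSet_Ioc]
      have : ∀ᵐ t : ℝ, t ≠ 1 / 2 := by
        simp [ae_iff]
      filter_upwards [this] with t ht htm
      have hp := hpos t htm.1.le
      rcases lt_or_gt_of_ne ht with h | h
      · have hd : deriv γ t = 2 * (c - z) := by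
          have e : γ =ᶠ[𝓝 t] fun t => z + ((2 * t : ℝ) : ℂ) * (c - z) := by
            filter_upwards [Iio_mem_nhds h] with s hs using g1 s (le_of_lt hs)
          rw [e.deriv_eq]
          have : HasDerivAt (fun t : ℝ => z + ((2 * t : ℝ) : ℂ) * (c - z)) (2 * (c - z)) t := by
            have h2 : HasDerivAt (fun t : ℝ => 2 * t) 2 t := by
              simpa using (hasDerivAt_id t).const_mul 2
            simpa using (h2.ofReal_comp.mul_const (c - z)).const_add z
          exact this.deriv
        have hn : ‖deriv γ t‖ = 2 * q := by
          rw [hd, norm_mul, norm_sub_rev]; simp [hq]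
        rw [hn]
        have := le_infDist_of_ball (b1 t htm.1.le h.le)
        have : 2 * q / infDist (γ t) (frontier threeDiscs) ≤ 2 * q / (1 - q + 2 * q * t) :=
          div_le_div_of_nonneg_left (by linarith) hp this
        linarith
      · have hd : deriv γ t = (-2) * c := by
          have e : γ =ᶠ[𝓝 t] fun t => ((2 - 2 * t : ℝ) : ℂ) * c := by
            filter_upwards [Ioi_mem_nhds h] with s hs using g2 s (le_of_lt hs)
          rw [e.deriv_eq]
          have : HasDerivAt (fun t : ℝ => ((2 - 2 * t : ℝ) : ℂ) * c) ((-2) * c) t := by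
            have h2 : HasDerivAt (fun t : ℝ => 2 - 2 * t) (-2) t := by
              simpa using ((hasDerivAt_id t).const_mul 2).const_sub 2
            simpa using (h2.ofReal_comp.mul_const c)
          exact this.deriv
        have hn : ‖deriv γ t‖ ≤ 3 := by
          rw [hd, norm_mul]; simp; linarith
        have h4 := le_infDist_of_ball (b2 t h.le htm.2)
        have : ‖deriv γ t‖ / infDist (γ t) (frontier threeDiscs) ≤ 3 / (1 / 4) :=
          div_le_div₀ (by norm_num) hn (by norm_num) h4
        have : 0 ≤ 2 * q / (1 - q + 2 * q * t) := div_nonneg (by linarith) hp.le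
        linarith
  refine hcmp.trans ?_
  rw [hval]
  have : Real.log ((1 + q) / (1 - q)) ≤ Real.log (2 / (1 - q)) := by
    apply Real.log_le_log (div_pos (by linarith) (by linarith))
    exact div_le_div_of_nonneg_right (by linarith) (by linarith)
  linarith

lemma qhbc_three : QHBC threeDiscs := by
  refine ⟨1, 12 + Real.log 6, 0, ?_, ?_⟩
  · rw [mem_three]; norm_num
  intro z hz
  obtain ⟨c, hc, h1, w, hw, h2⟩ := geom hz
  have hk := qh_bound hc h1
  have hd := (infDist_le_of_not_mem hz hw).trans h2
  have hd0 : 0 < infDist z (frontier threeDiscs) := by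
    obtain ⟨r, hr, hb⟩ := Metric.isOpen_iff.1 open_three z hz
    exact lt_of_lt_of_le hr (le_infDist_of_ball hb)
  have h0 : 1 ≤ infDist (0:ℂ) (frontier threeDiscs) :=
    le_infDist_of_ball (centers_ball (by simp [centers]))
  have hδ : 0 < 1 - ‖z - c‖ := by linarith
  refine hk.trans ?_
  rw [one_mul, Real.log_div (by linarith) hd0.ne', Real.log_div (by norm_num) hδ.ne']
  have a1 := Real.log_nonneg h0
  have a2 := Real.log_le_log hd0 hd
  rw [Real.log_mul (by norm_num) hδ.ne'] at a2
  have a3 : Real.log 6 = Real.log 2 + Real.log 3 := by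
    rw [← Real.log_mul (by norm_num) (by norm_num)]; norm_num
  linarith

lemma vol_diff {ρ : ℝ} (hρ : 0 < ρ) :
    volume (ball (1:ℂ) ρ \ threeDiscs) ≤ ENNReal.ofReal ρ * volume (ball (1:ℂ) ρ) := by
  have hsub : ball (1:ℂ) ρ \ threeDiscs ⊆
      Complex.measurableEquivRealProd ⁻¹' (Icc (1 - ρ) (1 + ρ) ×ˢ Icc (-(ρ ^ 2 / 2)) (ρ ^ 2 / 2)) := by
    rintro z ⟨hz, hn⟩
    rw [mem_three] at hn
    push Not at hn
    obtain ⟨-, h2, h3⟩ := hn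
    rw [mem_ball, dist_eq_norm, nlt hρ.le] at hz
    simp at hz
    simp only [mem_preimage, Complex.measurableEquivRealProd_apply, mem_prod, mem_Icc]
    refine ⟨⟨?_, ?_⟩, ?_, ?_⟩ <;> nlinarith
  refine (measure_mono hsub).trans ?_
  rw [Complex.volume_preserving_equiv_real_prod.measure_preimage
    (measurableSet_Icc.prod measurableSet_Icc).nullMeasurableSet,
    Measure.volume_eq_prod, Measure.prod_prod, Real.volume_Icc, Real.volume_Icc,
    Complex.volume_ball, ← ENNReal.ofReal_mul (by linarith)]
  have : (NNReal.pi : ℝ≥0∞) = ENNReal.ofReal Real.pi := by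
    rw [ENNReal.ofReal, ← NNReal.coe_real_pi, Real.toNNReal_coe]
  rw [this, ← ENNReal.ofReal_pow hρ.le, ← ENNReal.ofReal_mul (by positivity),
    ← ENNReal.ofReal_mul (by positivity)]
  apply ENNReal.ofReal_le_ofReal
  have := Real.pi_gt_three
  have : 0 < ρ ^ 3 := by positivity
  nlinarith

lemma dens_three : Filter.Tendsto
      (fun ρ : ℝ => volume (threeDiscs ∩ Metric.ball (1 : ℂ) ρ) /
        volume (Metric.ball (1 : ℂ) ρ)) (𝓝[>] 0) (𝓝 1) := by
  have hl : Tendsto (fun ρ : ℝ => 1 - ENNReal.ofReal ρ) (𝓝[>] 0) (𝓝 1) := by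
    have h1 : Tendsto (fun ρ : ℝ => ENNReal.ofReal ρ) (𝓝[>] 0) (𝓝 0) := by
      have := (ENNReal.continuous_ofReal.tendsto 0).mono_left (nhdsWithin_le_nhds (s := Ioi 0))
      simpa using this
    have := ENNReal.Tendsto.sub (tendsto_const_nhds (x := (1:ℝ≥0∞))) h1 (Or.inl ENNReal.one_ne_top)
    simpa using this
  refine tendsto_of_tendsto_of_tendsto_of_le_of_le' hl tendsto_const_nhds ?_ ?_
  · filter_upwards [self_mem_nhdsWithin] with ρ hρ
    have hρ' : (0:ℝ) < ρ := hρ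
    have hV0 : volume (ball (1:ℂ) ρ) ≠ 0 := (measure_ball_pos volume _ hρ').ne'
    have hVt : volume (ball (1:ℂ) ρ) ≠ ⊤ := measure_ball_lt_top.ne
    rw [ENNReal.le_div_iff_mul_le (Or.inl hV0) (Or.inl hVt),
      ENNReal.sub_mul (fun _ _ => hVt), one_mul, tsub_le_iff_right]
    have := measure_inter_add_diff (μ := volume) (ball (1:ℂ) ρ) open_three.measurableSet
    rw [inter_comm] at this
    calc _ = _ := this.symm
      _ ≤ _ := by gcongr; exact vol_diff hρ'
  · exact Eventually.of_forall fun ρ =>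
      ENNReal.div_le_of_le_mul (by rw [one_mul]; exact measure_mono inter_subset_right)

lemma not_A_three : ¬ ACondition threeDiscs := by
  rintro ⟨Θ, ⟨_, hΘ⟩, ρ₀, ⟨hρ0, _⟩, h⟩
  have : (1:ℝ≥0∞) ≤ ENNReal.ofReal Θ := by
    refine le_of_tendsto dens_three ?_
    filter_upwards [Ioc_mem_nhdsGT hρ0] with ρ hρ
    exact ENNReal.div_le_of_le_mul (h 1 one_mem_frontier ρ hρ.1 hρ.2)
  have h2 : ENNReal.ofReal Θ < 1 := by
    rw [← ENNReal.ofReal_one]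
    exact (ENNReal.ofReal_lt_ofReal_iff one_pos).2 hΘ
  exact absurd this (not_le.2 h2)

/-- the union of the three discs satisfies the quasihyperbolic boundary
condition but not the (A)-condition; at the boundary point `1` the density of the domain
tends to `1`. -/
theorem three_discs_qhbc_not_A :
    QHBC threeDiscs ∧
    Filter.Tendsto
      (fun ρ : ℝ => volume (threeDiscs ∩ Metric.ball (1 : ℂ) ρ) /
        volume (Metric.ball (1 : ℂ) ρ)) (𝓝[>] 0) (𝓝 1) ∧
    ¬ ACondition threeDiscs := by
  exact ⟨qhbc_three, dens_three, not_A_three⟩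
end
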